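/- For every natural number n ≥ 1, the claw graph CG(n) and its companion CG'(n) are TF-cousins if and only if n is odd. That is: there exist bijections α, β between the vertex sets such that for all vertices x, y, x and y are adjacent in CG'(n) if and only if α(x) and β(y) are adjacent in CG(n), and moreover CG(n) and CG'(n) are not isomorphic, if and only if n is odd. -/

import Mathlib

/-- Vertices of the claw graph `CG(n)`: circuit vertices indexed by `ZMod (6n)`,
leaves indexed by `Fin n × Fin 3`, and centres indexed by `Fin n`. -/
inductive ClawVert (n : ℕ) : Type
  | circ : ZMod (6 * n) → ClawVert n
  | leaf : Fin n → Fin 3 → ClawVert n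
  | centre : Fin n → ClawVert n
  deriving DecidableEq

/-- Edge relation (before symmetrization) for the claw graph `CG(n)`:
a cycle `C_{6n}` on the circuit vertices, claw edges `c_i ~ ℓ_{i,j}`, and leaf
`ℓ_{i,j}` joined to the antipodal pair `u_{i+jn}`, `u_{i+jn+3n}`. -/
def cgRel (n : ℕ) : ClawVert n → ClawVert n → Prop
  | .circ m, .circ m' => m' = m + 1
  | .centre i, .leaf i' _ => i = i'
  | .leaf i j, .circ m =>
      m = ((i : ℕ) : ZMod (6 * n)) + ((j : ℕ) : ZMod (6 * n)) * ((n : ℕ) : ZMod (6 * n)) ∨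
      m = ((i : ℕ) : ZMod (6 * n)) + ((j : ℕ) : ZMod (6 * n)) * ((n : ℕ) : ZMod (6 * n))
            + ((3 * n : ℕ) : ZMod (6 * n))
  | _, _ => False

/-- The claw graph `CG(n)`. -/
def CG (n : ℕ) : SimpleGraph (ClawVert n) := SimpleGraph.fromRel (cgRel n)

/-- Edge relation (before symmetrization) for the companion `CG'(n)`: the same
claw and leaf edges, but the circuit `C_{6n}` is replaced by two disjoint copies
of `C_{3n}`: writing a circuit index as `s·3n + a` with `0 ≤ a < 3n`,
`u_{s·3n+a} ~ u_{s'·3n+a'}` iff `s = s'` and `a' ≡ a ± 1 (mod 3n)`. -/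
def cgRel' (n : ℕ) : ClawVert n → ClawVert n → Prop
  | .circ m, .circ m' =>
      m.val / (3 * n) = m'.val / (3 * n) ∧
      m'.val % (3 * n) = (m.val % (3 * n) + 1) % (3 * n)
  | .centre i, .leaf i' _ => i = i'
  | .leaf i j, .circ m =>
      m = ((i : ℕ) : ZMod (6 * n)) + ((j : ℕ) : ZMod (6 * n)) * ((n : ℕ) : ZMod (6 * n)) ∨
      m = ((i : ℕ) : ZMod (6 * n)) + ((j : ℕ) : ZMod (6 * n)) * ((n : ℕ) : ZMod (6 * n))
            + ((3 * n : ℕ) : ZMod (6 * n))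
  | _, _ => False

/-- The companion claw graph `CG'(n)`. -/
def CG' (n : ℕ) : SimpleGraph (ClawVert n) := SimpleGraph.fromRel (cgRel' n)

/-!
Both graphs are the same claws hung on a circuit through the reduction `ZMod (6n) → ZMod (3n)`, so
the half turn `m ↦ m + 3n` is an automorphism of each.

For odd `n` the Chinese remainder theorem identifies `ZMod (6n)` with `ZMod 2 × ZMod (3n)`. In these
coordinates a step of the long circuit moves both components, a step of the companion circuit only
the second, and shifting one of the two bijections by the half turn compensates the difference.

For even `n` both graphs are bipartite and `CG(n)` is connected, and a TF-isomorphism between such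
graphs can be turned into an isomorphism by using `α` on one colour class and `β` on the other.

The graphs are never isomorphic, because the eigenvalue `2` has different multiplicities. An
eigenfunction of `CG(n)` minus its half turn is harmonic on the cycle `C_{6n}`, hence constant, and
changes sign under the half turn, hence vanishes. So the eigenfunctions of `CG(n)` are invariant
under the half turn, and invariant functions cannot tell the two circuits apart; but `CG'(n)` has
one more eigenfunction, equal to `±1` on the two short cycles and `0` elsewhere.
-/

open SimpleGraph

section TFIso

variable {V W : Type*} {G : SimpleGraph V} {H : SimpleGraph W} {α β : V ≃ W}

/-- The pair `(α, β)` is a TF-isomorphism from `G` to `H`. -/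
def IsTFIso (G : SimpleGraph V) (H : SimpleGraph W) (α β : V ≃ W) : Prop :=
  ∀ x y, G.Adj x y ↔ H.Adj (α x) (β y)

theorem IsTFIso.swap (h : IsTFIso G H α β) : IsTFIso G H β α := fun x y => by
  rw [G.adj_comm, h y x, H.adj_comm]

theorem IsTFIso.symm (h : IsTFIso G H α β) : IsTFIso H G α.symm β.symm := fun x y => by
  rw [h, α.apply_symm_apply, β.apply_symm_apply]

theorem IsTFIso.adj_ite_iff (h : IsTFIso G H α β) (c : V → Bool) {x y : V} (hxy : c x ≠ c y) :
    H.Adj (if c x then α x else β x) (if c y then α y else β y) ↔ G.Adj x y := by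
  cases hx : c x <;> cases hy : c y
  · exact absurd (hx.trans hy.symm) hxy
  · simpa using (h.swap x y).symm
  · simpa using (h x y).symm
  · exact absurd (hx.trans hy.symm) hxy

/-- The homomorphism that applies `α` to the vertices of colour `true` and `β` to the others. -/
def IsTFIso.mixHom (h : IsTFIso G H α β) (c : G.Coloring Bool) : G →g H where
  toFun x := if c x then α x else β x
  map_rel' hxy := (h.adj_ite_iff c (c.valid hxy)).2 hxy

theorem IsTFIso.mixHom_apply (h : IsTFIso G H α β) (c : G.Coloring Bool) (x : V) :
    h.mixHom c x = if c x then α x else β x := rfl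

theorem coloring_eq_iff_of_preconnected (hG : G.Preconnected) (c d : G.Coloring Bool) (x y : V) :
    c x = c y ↔ d x = d y := by
  obtain ⟨p⟩ := hG x y
  rw [Bool.eq_iff_iff, Bool.eq_iff_iff (a := d x), ← c.even_length_iff_congr p,
    ← d.even_length_iff_congr p]

theorem IsTFIso.apply_ne_apply (h : IsTFIso G H α β) (hG : G.Preconnected) (c : G.Coloring Bool)
    (d : H.Coloring Bool) {x y : V} (hx : c x = true) (hy : c y = false) : α x ≠ β y := by
  intro hαβ
  have hmix : h.mixHom c x = h.mixHom c y := by simpa [mixHom_apply, hx, hy] using hαβ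
  have hc : c x = c y :=
    (coloring_eq_iff_of_preconnected hG c (d.comp (h.mixHom c)) x y).2 (congrArg d hmix)
  simp [hx, hy] at hc

theorem IsTFIso.mixHom_bijective (h : IsTFIso G H α β) (hG : G.Preconnected)
    (c : G.Coloring Bool) (d : H.Coloring Bool) : Function.Bijective (h.mixHom c) := by
  constructor
  · intro x y hxy
    rw [mixHom_apply, mixHom_apply] at hxy
    cases hx : c x <;> cases hy : c y <;> simp only [hx, hy, if_true, Bool.false_eq_true, if_false]
      at hxy
    · exact β.injective hxy
    · exact (h.apply_ne_apply hG c d hy hx hxy.symm).elim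
    · exact (h.apply_ne_apply hG c d hx hy hxy).elim
    · exact α.injective hxy
  · intro z
    cases hx : c (α.symm z) with
    | true => exact ⟨α.symm z, by simp [mixHom_apply, hx]⟩
    | false =>
      cases hy : c (β.symm z) with
      | true => exact (h.swap.apply_ne_apply hG c d hy hx (by simp)).elim
      | false => exact ⟨β.symm z, by simp [mixHom_apply, hy]⟩

theorem IsTFIso.adj_mixHom_iff (h : IsTFIso G H α β) (hG : G.Preconnected) (c : G.Coloring Bool)
    (d : H.Coloring Bool) (x y : V) : H.Adj (h.mixHom c x) (h.mixHom c y) ↔ G.Adj x y := by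
  by_cases hxy : c x = c y
  · have hd : d (h.mixHom c x) = d (h.mixHom c y) :=
      (coloring_eq_iff_of_preconnected hG c (d.comp (h.mixHom c)) x y).1 hxy
    exact iff_of_false (fun hadj => d.valid hadj hd) (fun hadj => c.valid hadj hxy)
  · exact h.adj_ite_iff c hxy

theorem IsTFIso.nonempty_iso (h : IsTFIso G H α β) (hG : G.Preconnected) (hG₂ : G.IsBipartite)
    (hH₂ : H.IsBipartite) : Nonempty (G ≃g H) := by
  let c : G.Coloring Bool := hG₂.toColoring (by simp)
  let d : H.Coloring Bool := hH₂.toColoring (by simp)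
  exact ⟨⟨Equiv.ofBijective _ (h.mixHom_bijective hG c d), h.adj_mixHom_iff hG c d _ _⟩⟩

end TFIso

section AdjEigenspace

variable {V W K : Type*} [Fintype V] [Fintype W] [Field K]

open scoped Classical in
/-- The eigenspace of the adjacency matrix of `G` for the eigenvalue `μ`. -/
noncomputable def adjEigenspace (G : SimpleGraph V) (μ : K) : Submodule K (V → K) :=
  Module.End.eigenspace (G.adjMatrix K).mulVecLin μ

theorem mem_adjEigenspace {G : SimpleGraph V} [DecidableRel G.Adj] {μ : K} {f : V → K} :
    f ∈ adjEigenspace G μ ↔ ∀ x, ∑ y with G.Adj x y, f y = μ * f x := by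
  rw [adjEigenspace, Module.End.mem_eigenspace_iff, funext_iff]
  refine forall_congr' fun x => ?_
  rw [Matrix.mulVecLin_apply, adjMatrix_mulVec_apply, neighborFinset_eq_filter, Pi.smul_apply,
    smul_eq_mul]
  congr!

theorem adjEigenspace_eq_map_of_iso {G : SimpleGraph V} {H : SimpleGraph W} (e : G ≃g H) (μ : K) :
    adjEigenspace G μ =
      (adjEigenspace H μ).map (LinearEquiv.funCongrLeft K K e.toEquiv).toLinearMap := by
  classical
  ext f
  rw [Submodule.mem_map_equiv, mem_adjEigenspace, mem_adjEigenspace, ← e.forall_congr_right]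
  refine forall_congr' fun x => ?_
  have hsum : ∑ y with G.Adj x y, f y = ∑ z with H.Adj (e x) z, f (e.symm z) := by
    simp only [Finset.sum_filter]
    exact Fintype.sum_equiv e.toEquiv _ _ fun y =>
      if_congr e.map_adj_iff.symm (congrArg f (e.symm_apply_apply y).symm) rfl
  change _ ↔ ∑ z with H.Adj (e x) z, f (e.symm z) = μ * f (e.symm (e x))
  rw [hsum, e.symm_apply_apply]

theorem adjEigenspace_eq_of_le_of_iso {G H : SimpleGraph V} (e : G ≃g H) {μ : K}
    (h : adjEigenspace G μ ≤ adjEigenspace H μ) : adjEigenspace G μ = adjEigenspace H μ :=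
  Submodule.eq_of_le_of_finrank_eq h <| by
    rw [adjEigenspace_eq_map_of_iso e, LinearEquiv.finrank_map_eq]

end AdjEigenspace

section Cycle

theorem circulantGraph_one_adj {R : Type*} [Ring R] [Nontrivial R] {a b : R} :
    (circulantGraph {1}).Adj a b ↔ b = a + 1 ∨ b = a - 1 := by
  rw [circulantGraph_adj]
  simp only [Set.mem_singleton_iff]
  constructor
  · rintro ⟨-, h | h⟩
    · exact Or.inr (by rw [← h]; abel)
    · exact Or.inl (by rw [← h]; abel)
  · rintro (rfl | rfl) <;> simp [eq_sub_iff_add_eq]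

theorem zmod_add_one_ne_sub_one {N : ℕ} (hN : 2 < N) (a : ZMod N) : a + 1 ≠ a - 1 := by
  have : Fact (2 < N) := ⟨hN⟩
  intro h
  exact ZMod.neg_one_ne_one (n := N) (by linear_combination -h)

theorem sum_circulantGraph_one {M : Type*} [AddCommMonoid M] {N : ℕ} [NeZero N] (hN : 2 < N)
    (u : ZMod N → M) (a : ZMod N) :
    ∑ b with (circulantGraph {1}).Adj a b, u b = u (a + 1) + u (a - 1) := by
  have : Fact (1 < N) := ⟨by omega⟩
  rw [← Finset.sum_pair (zmod_add_one_ne_sub_one hN a)]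
  congr 1
  ext b
  rw [Finset.mem_filter_univ, circulantGraph_one_adj, Finset.mem_insert, Finset.mem_singleton]

theorem eq_apply_zero_of_periodic_one {M : Type*} {N : ℕ} [NeZero N] {g : ZMod N → M}
    (hg : Function.Periodic g 1) (m : ZMod N) : g m = g 0 := by
  simpa using hg.nat_mul_eq m.val

theorem periodic_one_of_harmonic {M : Type*} [AddCommGroup M] [IsAddTorsionFree M] {N : ℕ}
    [NeZero N] {g : ZMod N → M} (hg : ∀ m, g (m + 1) + g (m - 1) = 2 • g m) :
    Function.Periodic g 1 := by
  -- The increments of `g` are all equal and add up to `0` around the cycle.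
  have hd : Function.Periodic (fun m => g (m + 1) - g m) 1 := fun m => by
    have h := hg (m + 1)
    rw [add_sub_cancel_right, two_nsmul] at h
    change g (m + 1 + 1) - g (m + 1) = g (m + 1) - g m
    rwa [sub_eq_sub_iff_add_eq_add]
  have hsum : ∑ m, (g (m + 1) - g m) = 0 := by
    rw [Finset.sum_sub_distrib, sub_eq_zero]
    exact Equiv.sum_comp (Equiv.addRight 1) g
  have hzero : g (0 + 1) - g 0 = 0 := by
    rw [Finset.sum_congr rfl fun m _ => eq_apply_zero_of_periodic_one hd m, Finset.sum_const,
      Finset.card_univ, ZMod.card] at hsum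
    exact (nsmul_eq_zero_iff_right (NeZero.ne N)).1 hsum
  exact fun m => sub_eq_zero.1 ((eq_apply_zero_of_periodic_one hd m).trans hzero)

end Cycle

section CircuitCoordinates

variable (n : ℕ)

/-- Reduction of circuit indices modulo `3n`. Two circuit vertices are joined to the same leaf
exactly when they have the same foot. -/
def foot : ZMod (6 * n) →+* ZMod (3 * n) :=
  ZMod.castHom ⟨2, by ring⟩ (ZMod (3 * n))

/-- The translation by half a turn around the long circuit, the index shift between the two
circuit neighbours of a leaf. -/
def halfTurn : ZMod (6 * n) := (3 * n : ℕ)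

/-- The quotient `s` of a circuit index `s·3n + a`: the copy of `C_{3n}` on which a circuit vertex
lies in `CG'(n)`. It takes the values `0` and `1` only, so it is recorded in `ZMod 2`. -/
def sheet (m : ZMod (6 * n)) : ZMod 2 := (m.val / (3 * n) : ℕ)

theorem foot_halfTurn : foot n (halfTurn n) = 0 := by
  rw [halfTurn, map_natCast, ZMod.natCast_self]

theorem foot_add_halfTurn (m : ZMod (6 * n)) : foot n (m + halfTurn n) = foot n m := by
  rw [map_add, foot_halfTurn, add_zero]

theorem halfTurn_add_halfTurn : halfTurn n + halfTurn n = 0 := by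
  rw [halfTurn, ← Nat.cast_add, ← ZMod.natCast_self (6 * n)]
  congr 1
  ring

variable [NeZero n]

instance : Fact (1 < 3 * n) := ⟨by have := NeZero.pos n; omega⟩

instance : Fact (1 < 6 * n) := ⟨by have := NeZero.pos n; omega⟩

theorem foot_eq_natCast_val (m : ZMod (6 * n)) : foot n m = (m.val : ℕ) := by
  rw [← map_natCast (foot n), ZMod.natCast_zmod_val]

theorem val_div_lt_two (m : ZMod (6 * n)) : m.val / (3 * n) < 2 :=
  Nat.div_lt_of_lt_mul (m.val_lt.trans_eq (by ring))

theorem halfTurn_ne_zero : halfTurn n ≠ 0 := by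
  have := NeZero.pos n
  rw [halfTurn, Ne, ZMod.natCast_eq_zero_iff]
  exact fun h => absurd (Nat.le_of_dvd (by omega) h) (by omega)

theorem foot_eq_zero_iff {m : ZMod (6 * n)} : foot n m = 0 ↔ m = 0 ∨ m = halfTurn n := by
  constructor
  · intro h
    rw [foot_eq_natCast_val, ZMod.natCast_eq_zero_iff] at h
    have hval := Nat.div_mul_cancel h
    have hlt := val_div_lt_two n m
    rw [← ZMod.natCast_zmod_val m, ← hval]
    interval_cases m.val / (3 * n) <;> simp [halfTurn]
  · rintro (rfl | rfl)
    exacts [map_zero _, foot_halfTurn n]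

theorem foot_eq_foot_iff {m m' : ZMod (6 * n)} :
    foot n m = foot n m' ↔ m = m' ∨ m = m' + halfTurn n := by
  rw [← sub_eq_zero, ← map_sub, foot_eq_zero_iff, sub_eq_zero, sub_eq_iff_eq_add']

theorem sheet_eq_sheet_iff {m m' : ZMod (6 * n)} :
    sheet n m = sheet n m' ↔ m.val / (3 * n) = m'.val / (3 * n) := by
  rw [sheet, sheet, ZMod.natCast_eq_natCast_iff', Nat.mod_eq_of_lt (val_div_lt_two n m),
    Nat.mod_eq_of_lt (val_div_lt_two n m')]

theorem foot_eq_foot_add_one_iff {m m' : ZMod (6 * n)} :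
    foot n m' = foot n m + 1 ↔ m'.val % (3 * n) = (m.val % (3 * n) + 1) % (3 * n) := by
  rw [foot_eq_natCast_val, foot_eq_natCast_val, ← Nat.cast_add_one, ZMod.natCast_eq_natCast_iff',
    Nat.mod_add_mod]

theorem sheet_foot_injective : Function.Injective fun m => (sheet n m, foot n m) := by
  intro m m' h
  obtain ⟨hs, hf⟩ := Prod.mk.inj h
  rw [foot_eq_natCast_val, foot_eq_natCast_val, ZMod.natCast_eq_natCast_iff'] at hf
  rw [sheet_eq_sheet_iff] at hs
  apply ZMod.val_injective
  rw [← Nat.div_add_mod m.val (3 * n), ← Nat.div_add_mod m'.val (3 * n), hs, hf]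

/-- The coordinates `(s, a)` of the circuit index `s·3n + a`. -/
noncomputable def sheetFoot : ZMod (6 * n) ≃ ZMod 2 × ZMod (3 * n) :=
  Equiv.ofBijective _ <| (Fintype.bijective_iff_injective_and_card _).2
    ⟨sheet_foot_injective n, by simp only [Fintype.card_prod, ZMod.card]; ring⟩

theorem sheetFoot_apply (m : ZMod (6 * n)) : sheetFoot n m = (sheet n m, foot n m) := rfl

theorem sheet_sheetFoot_symm (p : ZMod 2 × ZMod (3 * n)) : sheet n ((sheetFoot n).symm p) = p.1 :=
  congrArg Prod.fst ((sheetFoot n).apply_symm_apply p)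

theorem foot_sheetFoot_symm (p : ZMod 2 × ZMod (3 * n)) : foot n ((sheetFoot n).symm p) = p.2 :=
  congrArg Prod.snd ((sheetFoot n).apply_symm_apply p)

theorem sheet_add_halfTurn_ne (m : ZMod (6 * n)) : sheet n (m + halfTurn n) ≠ sheet n m := by
  intro h
  have := sheet_foot_injective n (Prod.ext h (foot_add_halfTurn n m))
  exact halfTurn_ne_zero n (left_eq_add.1 this.symm)

end CircuitCoordinates

section Circuits

variable (n : ℕ)

/-- The cycle `C_{6n}` on the circuit vertices of `CG(n)`. -/
abbrev circuit : SimpleGraph (ZMod (6 * n)) := circulantGraph {1}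

variable [NeZero n]

/-- The two disjoint cycles `C_{3n}` on the circuit vertices of `CG'(n)`. -/
noncomputable def companionCircuit : SimpleGraph (ZMod (6 * n)) :=
  ((⊥ : SimpleGraph (ZMod 2)) □ circulantGraph {1}).comap (sheetFoot n)

variable {n} {m m' : ZMod (6 * n)}

theorem companionCircuit_adj : (companionCircuit n).Adj m m' ↔
    (circulantGraph {1}).Adj (foot n m) (foot n m') ∧ sheet n m = sheet n m' := by
  simp [companionCircuit, sheetFoot_apply]

noncomputable instance : DecidableRel (companionCircuit n).Adj := fun _ _ =>
  decidable_of_iff _ companionCircuit_adj.symm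

theorem circuit_adj_iff_cgRel :
    (circuit n).Adj m m' ↔ cgRel n (.circ m) (.circ m') ∨ cgRel n (.circ m') (.circ m) := by
  rw [circulantGraph_one_adj, eq_sub_iff_add_eq, eq_comm (a := m' + 1)]
  rfl

theorem companionCircuit_adj_iff_cgRel' :
    (companionCircuit n).Adj m m' ↔
      cgRel' n (.circ m) (.circ m') ∨ cgRel' n (.circ m') (.circ m) := by
  rw [companionCircuit_adj, circulantGraph_one_adj, eq_sub_iff_add_eq, eq_comm (a := _ + 1),
    foot_eq_foot_add_one_iff, foot_eq_foot_add_one_iff, sheet_eq_sheet_iff]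
  simp only [cgRel']
  tauto

theorem circuit_le_comap_foot : circuit n ≤ (circulantGraph {1}).comap (foot n) := by
  intro m m' h
  rw [circulantGraph_one_adj] at h
  rw [comap_adj, circulantGraph_one_adj]
  rcases h with rfl | rfl <;> simp

theorem companionCircuit_le_comap_foot :
    companionCircuit n ≤ (circulantGraph {1}).comap (foot n) :=
  fun _ _ h => (companionCircuit_adj.1 h).1

theorem sum_companionCircuit {M : Type*} [AddCommMonoid M] (u : ZMod (6 * n) → M)
    (m : ZMod (6 * n)) :
    ∑ m' with (companionCircuit n).Adj m m', u m' =
      u ((sheetFoot n).symm (sheet n m, foot n m + 1)) +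
        u ((sheetFoot n).symm (sheet n m, foot n m - 1)) := by
  have h3 : 2 < 3 * n := by have := NeZero.pos n; omega
  rw [← sum_circulantGraph_one h3 fun a => u ((sheetFoot n).symm (sheet n m, a))]
  have hinv {m' : ZMod (6 * n)} (h : (companionCircuit n).Adj m m') :
      (sheetFoot n).symm (sheet n m, foot n m') = m' := by
    rw [Equiv.symm_apply_eq, sheetFoot_apply, (companionCircuit_adj.1 h).2]
  refine Finset.sum_bij' (fun m' _ => foot n m') (fun a _ => (sheetFoot n).symm (sheet n m, a))
    (fun m' h => ?_) (fun a h => ?_) (fun m' h => ?_) (fun a _ => ?_) (fun m' h => ?_)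
  all_goals simp only [Finset.mem_filter_univ] at *
  · exact (companionCircuit_adj.1 h).1
  · rw [companionCircuit_adj, foot_sheetFoot_symm, sheet_sheetFoot_symm]
    exact ⟨h, rfl⟩
  · exact hinv h
  · rw [foot_sheetFoot_symm]
  · rw [hinv h]

theorem circuit_reachable_zero (m : ZMod (6 * n)) : (circuit n).Reachable 0 m := by
  have hnat (k : ℕ) : (circuit n).Reachable 0 k := by
    induction k with
    | zero => rw [Nat.cast_zero]
    | succ k ih =>
      refine ih.trans (Adj.reachable ?_)
      rw [circulantGraph_one_adj, Nat.cast_succ]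
      exact Or.inl rfl
  simpa using hnat m.val

end Circuits

section ClawGraph

variable {n : ℕ}

/-- The foot of the two circuit neighbours of the leaf `ℓ_{i,j}`. -/
def leafFoot (i : Fin n) (j : Fin 3) : ZMod (3 * n) := (i : ℕ) + (j : ℕ) * (n : ℕ)

/-- The claws of `CG(n)` hung on an arbitrary graph `C` on the circuit vertices, so that `CG(n)` and
`CG'(n)` differ in `C` only. -/
def clawGraph (C : SimpleGraph (ZMod (6 * n))) : SimpleGraph (ClawVert n) where
  Adj
    | .circ m, .circ m' => C.Adj m m'
    | .circ m, .leaf i j | .leaf i j, .circ m => foot n m = leafFoot i j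
    | .leaf i _, .centre i' | .centre i', .leaf i _ => i' = i
    | _, _ => False
  symm := ⟨by rintro (_ | _ | _) (_ | _ | _) h <;> first | exact h | exact C.adj_symm h⟩
  loopless := ⟨by rintro (_ | _ | _) h <;> first | exact h | exact C.irrefl h⟩

section Adjacency

variable (C : SimpleGraph (ZMod (6 * n))) (m m' : ZMod (6 * n)) (i i' : Fin n) (j j' : Fin 3)

@[simp] theorem clawGraph_adj_circ_circ :
    (clawGraph C).Adj (.circ m) (.circ m') ↔ C.Adj m m' := Iff.rfl

@[simp] theorem clawGraph_adj_circ_leaf :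
    (clawGraph C).Adj (.circ m) (.leaf i j) ↔ foot n m = leafFoot i j := Iff.rfl

@[simp] theorem clawGraph_adj_leaf_circ :
    (clawGraph C).Adj (.leaf i j) (.circ m) ↔ foot n m = leafFoot i j := Iff.rfl

@[simp] theorem clawGraph_adj_leaf_centre :
    (clawGraph C).Adj (.leaf i j) (.centre i') ↔ i' = i := Iff.rfl

@[simp] theorem clawGraph_adj_centre_leaf :
    (clawGraph C).Adj (.centre i') (.leaf i j) ↔ i' = i := Iff.rfl

@[simp] theorem not_clawGraph_adj_circ_centre : ¬ (clawGraph C).Adj (.circ m) (.centre i) := id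

@[simp] theorem not_clawGraph_adj_centre_circ : ¬ (clawGraph C).Adj (.centre i) (.circ m) := id

@[simp] theorem not_clawGraph_adj_leaf_leaf :
    ¬ (clawGraph C).Adj (.leaf i j) (.leaf i' j') := id

@[simp] theorem not_clawGraph_adj_centre_centre :
    ¬ (clawGraph C).Adj (.centre i) (.centre i') := id

end Adjacency

theorem foot_eq_leafFoot_iff [NeZero n] {m : ZMod (6 * n)} {i : Fin n} {j : Fin 3} :
    foot n m = leafFoot i j ↔ m = (i : ℕ) + (j : ℕ) * (n : ℕ) ∨
      m = (i : ℕ) + (j : ℕ) * (n : ℕ) + ((3 * n : ℕ) : ZMod (6 * n)) := by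
  have h : leafFoot i j = foot n ((i : ℕ) + (j : ℕ) * (n : ℕ)) := by simp [leafFoot]
  rw [h, foot_eq_foot_iff, halfTurn]

theorem CG_eq_clawGraph [NeZero n] : CG n = clawGraph (circuit n) := by
  ext (m | ⟨i, j⟩ | i) (m' | ⟨i', j'⟩ | i')
  · rw [clawGraph_adj_circ_circ, CG, fromRel_adj, ← circuit_adj_iff_cgRel, and_iff_right_iff_imp]
    rintro h ⟨⟩
    exact h.ne rfl
  all_goals simp [CG, cgRel, foot_eq_leafFoot_iff]

theorem CG'_eq_clawGraph [NeZero n] : CG' n = clawGraph (companionCircuit n) := by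
  ext (m | ⟨i, j⟩ | i) (m' | ⟨i', j'⟩ | i')
  · rw [clawGraph_adj_circ_circ, CG', fromRel_adj, ← companionCircuit_adj_iff_cgRel',
      and_iff_right_iff_imp]
    rintro h ⟨⟩
    exact h.ne rfl
  all_goals simp [CG', cgRel', foot_eq_leafFoot_iff]

theorem clawGraph_circuit_preconnected [NeZero n] : (clawGraph (circuit n)).Preconnected := by
  let f : circuit n →g clawGraph (circuit n) := ⟨.circ, id⟩
  have hcirc (m) : (clawGraph (circuit n)).Reachable (.circ 0) (.circ m) :=
    (circuit_reachable_zero m).map f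
  have hleaf (i j) : (clawGraph (circuit n)).Reachable (.circ 0) (.leaf i j) := by
    refine (hcirc ((i : ℕ) + (j : ℕ) * (n : ℕ))).trans (Adj.reachable ?_)
    exact foot_eq_leafFoot_iff.2 (Or.inl rfl)
  have hcentre (i) : (clawGraph (circuit n)).Reachable (.circ 0) (.centre i) :=
    (hleaf i 0).trans (Adj.reachable rfl)
  have hzero (x) : (clawGraph (circuit n)).Reachable (.circ 0) x := by
    cases x
    exacts [hcirc _, hleaf _ _, hcentre _]
  exact fun x y => (hzero x).symm.trans (hzero y)

end ClawGraph

section Even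

variable {n : ℕ} {C : SimpleGraph (ZMod (6 * n))}

/-- The colour `ρ (foot m)` of the circuit vertices, extended to the claws. For even `n` and `ρ` the
reduction modulo `2` it is a proper 2-colouring of `CG(n)` and of `CG'(n)`. -/
def parityColor (ρ : ZMod (3 * n) →+* ZMod 2) : ClawVert n → ZMod 2
  | .circ m => ρ (foot n m)
  | .leaf i _ => (i : ℕ) + 1
  | .centre i => (i : ℕ)

theorem map_leafFoot_of_even (ρ : ZMod (3 * n) →+* ZMod 2) (hn : Even n) (i : Fin n) (j : Fin 3) :
    ρ (leafFoot i j) = (i : ℕ) := by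
  rw [leafFoot, map_add, map_mul, map_natCast, map_natCast, map_natCast,
    (ZMod.natCast_eq_zero_iff_even (n := n)).2 hn, mul_zero, add_zero]

theorem parityColor_ne_of_adj [NeZero n] (ρ : ZMod (3 * n) →+* ZMod 2) (hn : Even n)
    (hC : C ≤ (circulantGraph {1}).comap (foot n)) {x y : ClawVert n}
    (h : (clawGraph C).Adj x y) : parityColor ρ x ≠ parityColor ρ y := by
  have hleaf (m) (i : Fin n) (j) (hm : foot n m = leafFoot i j) :
      parityColor ρ (.circ m) ≠ parityColor ρ (.leaf i j) := by
    simp [parityColor, hm, map_leafFoot_of_even ρ hn]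
  have hcentre (i : Fin n) (j) : parityColor ρ (.leaf i j) ≠ parityColor ρ (.centre i) := by
    simp [parityColor]
  rcases x with m | ⟨i, j⟩ | i <;> rcases y with m' | ⟨i', j'⟩ | i'
  case circ.circ =>
    rcases circulantGraph_one_adj.1 (hC h) with hfoot | hfoot <;>
      simp [parityColor, hfoot, CharTwo.sub_eq_add]
  case circ.leaf => exact hleaf m i' j' h
  case leaf.circ => exact (hleaf m' i j h).symm
  case leaf.centre => exact h ▸ hcentre i j
  case centre.leaf => exact h ▸ (hcentre i' j').symm
  all_goals exact h.elim

theorem clawGraph_isBipartite [NeZero n] (hn : Even n)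
    (hC : C ≤ (circulantGraph {1}).comap (foot n)) : (clawGraph C).IsBipartite :=
  let ρ : ZMod (3 * n) →+* ZMod 2 := ZMod.castHom (hn.mul_left 3).two_dvd (ZMod 2)
  (Coloring.mk (parityColor ρ) (parityColor_ne_of_adj ρ hn hC)).colorable

theorem nonempty_iso_of_even [NeZero n] (hn : Even n) {α β : ClawVert n ≃ ClawVert n}
    (h : IsTFIso (CG' n) (CG n) α β) : Nonempty (CG n ≃g CG' n) := by
  rw [CG_eq_clawGraph, CG'_eq_clawGraph] at *
  exact h.symm.nonempty_iso clawGraph_circuit_preconnected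
    (clawGraph_isBipartite hn circuit_le_comap_foot)
    (clawGraph_isBipartite hn companionCircuit_le_comap_foot)

end Even

section Odd

variable {n : ℕ}

/-- The extension of a permutation of the circuit vertices that fixes leaves and centres. -/
def ClawVert.extendCirc (e : ZMod (6 * n) ≃ ZMod (6 * n)) : ClawVert n ≃ ClawVert n where
  toFun
    | .circ m => .circ (e m)
    | .leaf i j => .leaf i j
    | .centre i => .centre i
  invFun
    | .circ m => .circ (e.symm m)
    | .leaf i j => .leaf i j
    | .centre i => .centre i
  left_inv := by rintro (_ | _ | _) <;> simp
  right_inv := by rintro (_ | _ | _) <;> simp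

theorem IsTFIso.extendCirc {C D : SimpleGraph (ZMod (6 * n))} {a b : ZMod (6 * n) ≃ ZMod (6 * n)}
    (h : IsTFIso C D a b) (ha : ∀ m, foot n (a m) = foot n m) (hb : ∀ m, foot n (b m) = foot n m) :
    IsTFIso (clawGraph C) (clawGraph D) (ClawVert.extendCirc a) (ClawVert.extendCirc b) := by
  rintro (m | ⟨i, j⟩ | i) (m' | ⟨i', j'⟩ | i')
  case circ.circ => exact h m m'
  all_goals simp [ClawVert.extendCirc, ha, hb]

/-- The Chinese remainder isomorphism of circuit indices, for odd `n`. Its second component is the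
foot. -/
def crtEquiv (hn : Odd n) : ZMod (6 * n) ≃+* ZMod 2 × ZMod (3 * n) :=
  (ZMod.ringEquivCongr (by ring)).trans <|
    ZMod.chineseRemainder (Nat.coprime_two_left.2 (Odd.mul (by decide) hn))

theorem crtEquiv_snd (hn : Odd n) (m : ZMod (6 * n)) : (crtEquiv hn m).2 = foot n m :=
  RingHom.congr_fun
    (Subsingleton.elim ((RingHom.snd _ _).comp (crtEquiv hn).toRingHom) (foot n)) m

theorem crtEquiv_halfTurn (hn : Odd n) : crtEquiv hn (halfTurn n) = (1, 0) := by
  ext1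
  · rw [halfTurn, map_natCast, Prod.fst_natCast, ZMod.natCast_eq_one_iff_odd]
    exact Odd.mul (by decide) hn
  · rw [crtEquiv_snd, foot_halfTurn]

variable [NeZero n]

/-- The permutation of circuit indices sending the index with sheet `s` and foot `a` to the one
congruent to `s` modulo `2` and to `a` modulo `3n`. -/
noncomputable def twist (hn : Odd n) : ZMod (6 * n) ≃ ZMod (6 * n) :=
  (sheetFoot n).trans (crtEquiv hn).symm.toEquiv

theorem crtEquiv_twist (hn : Odd n) (m : ZMod (6 * n)) :
    crtEquiv hn (twist hn m) = (sheet n m, foot n m) :=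
  (crtEquiv hn).apply_symm_apply _

theorem foot_twist (hn : Odd n) (m : ZMod (6 * n)) : foot n (twist hn m) = foot n m := by
  rw [← crtEquiv_snd hn, crtEquiv_twist]

theorem isTFIso_twist (hn : Odd n) : IsTFIso (companionCircuit n) (circuit n) (twist hn)
    ((twist hn).trans (Equiv.addRight (halfTurn n))) := by
  intro m m'
  rw [companionCircuit_adj, circulantGraph_one_adj, circulantGraph_one_adj, Equiv.trans_apply,
    Equiv.coe_addRight, ← (crtEquiv hn).injective.eq_iff (b := twist hn m + 1),
    ← (crtEquiv hn).injective.eq_iff (b := twist hn m - 1)]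
  simp only [map_add, map_sub, map_one, crtEquiv_twist, crtEquiv_halfTurn, Prod.ext_iff,
    Prod.fst_add, Prod.snd_add, Prod.fst_sub, Prod.snd_sub, Prod.fst_one, Prod.snd_one, add_zero,
    CharTwo.sub_eq_add, add_left_inj]
  tauto

theorem exists_isTFIso_of_odd (hn : Odd n) :
    ∃ α β : ClawVert n ≃ ClawVert n, IsTFIso (CG' n) (CG n) α β := by
  rw [CG_eq_clawGraph, CG'_eq_clawGraph]
  refine ⟨_, _, (isTFIso_twist hn).extendCirc (foot_twist hn) fun m => ?_⟩
  exact (foot_add_halfTurn n _).trans (foot_twist hn m)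

end Odd

section NotIsomorphic

variable {n : ℕ}

/-- The decomposition of the vertex set into circuit vertices, leaves and centres, along which it
inherits its `Fintype` structure. -/
def ClawVert.equivSum : ClawVert n ≃ ZMod (6 * n) ⊕ (Fin n × Fin 3) ⊕ Fin n where
  toFun
    | .circ m => .inl m
    | .leaf i j => .inr (.inl (i, j))
    | .centre i => .inr (.inr i)
  invFun := Sum.elim .circ (Sum.elim (fun p => .leaf p.1 p.2) .centre)
  left_inv := by rintro (_ | _ | _) <;> rfl
  right_inv := by rintro (_ | _ | _) <;> rfl

variable [NeZero n]

instance : Fintype (ClawVert n) := Fintype.ofEquiv _ ClawVert.equivSum.symm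

theorem ClawVert.sum_eq {M : Type*} [AddCommMonoid M] (f : ClawVert n → M) :
    ∑ x, f x = ∑ m, f (.circ m) + (∑ i, ∑ j, f (.leaf i j) + ∑ i, f (.centre i)) := by
  rw [← Equiv.sum_comp ClawVert.equivSum.symm f, Fintype.sum_sum_type, Fintype.sum_sum_type,
    Fintype.sum_prod_type]
  rfl

theorem mem_adjEigenspace_clawGraph {K : Type*} [Field K] {C : SimpleGraph (ZMod (6 * n))}
    [DecidableRel C.Adj] {μ : K} {f : ClawVert n → K} :
    f ∈ adjEigenspace (clawGraph C) μ ↔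
      (∀ m, ∑ m' with C.Adj m m', f (.circ m') +
        ∑ i, ∑ j, (if foot n m = leafFoot i j then f (.leaf i j) else 0) = μ * f (.circ m)) ∧
      (∀ i j, ∑ m with foot n m = leafFoot i j, f (.circ m) + f (.centre i) = μ * f (.leaf i j)) ∧
      ∀ i, ∑ j, f (.leaf i j) = μ * f (.centre i) := by
  classical
  rw [mem_adjEigenspace]
  have hcirc (m) : ∑ y with (clawGraph C).Adj (.circ m) y, f y = ∑ m' with C.Adj m m', f (.circ m')
      + ∑ i, ∑ j, (if foot n m = leafFoot i j then f (.leaf i j) else 0) := by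
    simp [Finset.sum_filter, ClawVert.sum_eq]
  have hleaf (i j) : ∑ y with (clawGraph C).Adj (.leaf i j) y, f y =
      ∑ m with foot n m = leafFoot i j, f (.circ m) + f (.centre i) := by
    simp [Finset.sum_filter, ClawVert.sum_eq]
  have hcentre (i) : ∑ y with (clawGraph C).Adj (.centre i) y, f y = ∑ j, f (.leaf i j) := by
    simp [Finset.sum_filter, ClawVert.sum_eq]
  constructor
  · intro h
    exact ⟨fun m => by rw [← hcirc, h], fun i j => by rw [← hleaf, h],
      fun i => by rw [← hcentre, h]⟩
  · rintro ⟨h₁, h₂, h₃⟩ (m | ⟨i, j⟩ | i)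
    exacts [hcirc m ▸ h₁ m, hleaf i j ▸ h₂ i j, hcentre i ▸ h₃ i]

theorem two_lt_six_mul : 2 < 6 * n := by have := NeZero.pos n; omega

theorem apply_add_halfTurn_of_mem_adjEigenspace {f : ClawVert n → ℝ}
    (hf : f ∈ adjEigenspace (clawGraph (circuit n)) 2) (m : ZMod (6 * n)) :
    f (.circ (m + halfTurn n)) = f (.circ m) := by
  let g : ZMod (6 * n) → ℝ := fun m => f (.circ (m + halfTurn n)) - f (.circ m)
  have hg_harmonic (m) : g (m + 1) + g (m - 1) = 2 • g m := by
    have h := (mem_adjEigenspace_clawGraph.1 hf).1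
    have h₁ := h m
    have h₂ := h (m + halfTurn n)
    rw [sum_circulantGraph_one two_lt_six_mul fun m => f (.circ m)] at h₁ h₂
    rw [foot_add_halfTurn, add_right_comm m (halfTurn n) 1, add_sub_right_comm] at h₂
    simp only [g, nsmul_eq_mul, Nat.cast_ofNat]
    linear_combination h₂ - h₁
  have hg_const := eq_apply_zero_of_periodic_one (periodic_one_of_harmonic hg_harmonic)
  have hg_neg : g (m + halfTurn n) = -g m := by
    simp only [g, add_assoc, halfTurn_add_halfTurn, add_zero, neg_sub]
  have hg_zero : g m = 0 := by linarith [hg_const m, hg_const (m + halfTurn n)]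
  exact sub_eq_zero.1 hg_zero

theorem adjEigenspace_circuit_le_companion :
    adjEigenspace (clawGraph (circuit n)) (2 : ℝ) ≤
      adjEigenspace (clawGraph (companionCircuit n)) 2 := by
  intro f hf
  have hfoot {m m' : ZMod (6 * n)} (h : foot n m = foot n m') : f (.circ m) = f (.circ m') := by
    rcases (foot_eq_foot_iff n).1 h with rfl | rfl
    · rfl
    · exact apply_add_halfTurn_of_mem_adjEigenspace hf m'
  obtain ⟨hcirc, hleaf, hcentre⟩ := mem_adjEigenspace_clawGraph.1 hf
  refine mem_adjEigenspace_clawGraph.2 ⟨fun m => ?_, hleaf, hcentre⟩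
  rw [← hcirc m, sum_circulantGraph_one two_lt_six_mul fun m => f (.circ m),
    sum_companionCircuit fun m => f (.circ m)]
  congr 2 <;> apply hfoot <;> simp [foot_sheetFoot_symm]

/-- The function equal to `1` on one short cycle of `CG'(n)`, to `-1` on the other and to `0` on the
claws: the eigenfunction of `CG'(n)` that is odd under the half turn. -/
noncomputable def sheetSign : ClawVert n → ℝ
  | .circ m => if sheet n m = 0 then 1 else -1
  | _ => 0

theorem sheetSign_add_halfTurn (m : ZMod (6 * n)) :
    sheetSign (.circ (m + halfTurn n)) = -sheetSign (.circ m) := by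
  have zero_iff_of_ne : ∀ s s' : ZMod 2, s' ≠ s → (s' = 0 ↔ s ≠ 0) := by decide
  have hsheet := zero_iff_of_ne _ _ (sheet_add_halfTurn_ne n m)
  by_cases hs : sheet n m = 0 <;> simp [sheetSign, hsheet, hs]

theorem sum_sheetSign_foot_eq (a : ZMod (3 * n)) :
    ∑ m with foot n m = a, sheetSign (.circ m) = 0 := by
  have h : ∑ m with foot n m = a, sheetSign (.circ m) =
      -∑ m with foot n m = a, sheetSign (.circ m) := by
    rw [← Finset.sum_neg_distrib]
    refine Finset.sum_equiv (Equiv.addRight (halfTurn n)) (fun m => ?_) (fun m _ => ?_)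
    · simp [foot_halfTurn]
    · simp [sheetSign_add_halfTurn]
  linarith

theorem sheetSign_mem_adjEigenspace :
    sheetSign ∈ adjEigenspace (clawGraph (companionCircuit n)) (2 : ℝ) := by
  refine mem_adjEigenspace_clawGraph.2 ⟨fun m => ?_, fun i j => ?_, fun i => ?_⟩
  · rw [sum_companionCircuit fun m => sheetSign (.circ m)]
    simp only [sheetSign, sheet_sheetFoot_symm, ite_self, Finset.sum_const_zero]
    ring
  · rw [sum_sheetSign_foot_eq]
    simp [sheetSign]
  · simp [sheetSign]

theorem sheetSign_notMem_adjEigenspace :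
    sheetSign ∉ adjEigenspace (clawGraph (circuit n)) (2 : ℝ) := by
  intro h
  have hzero := apply_add_halfTurn_of_mem_adjEigenspace h 0
  rw [sheetSign_add_halfTurn, neg_eq_self] at hzero
  simp [sheetSign, sheet] at hzero

theorem isEmpty_CG_iso_CG' : IsEmpty (CG n ≃g CG' n) := by
  rw [CG_eq_clawGraph, CG'_eq_clawGraph]
  refine ⟨fun e => sheetSign_notMem_adjEigenspace (n := n) ?_⟩
  rw [adjEigenspace_eq_of_le_of_iso e adjEigenspace_circuit_le_companion]
  exact sheetSign_mem_adjEigenspace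

end NotIsomorphic

/-- For `n ≥ 1`, the claw graph `CG(n)` and its companion `CG'(n)` are
TF-cousins (TF-isomorphic but not isomorphic) iff `n` is odd. -/
theorem claw_tf_cousins_iff_odd (n : ℕ) (hn : 1 ≤ n) :
    ((∃ α β : ClawVert n ≃ ClawVert n,
        ∀ x y : ClawVert n, (CG' n).Adj x y ↔ (CG n).Adj (α x) (β y)) ∧
      IsEmpty (CG n ≃g CG' n)) ↔ Odd n := by
  have : NeZero n := ⟨Nat.one_le_iff_ne_zero.1 hn⟩
  constructor
  · rintro ⟨⟨α, β, h⟩, hempty⟩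
    by_contra hodd
    exact not_isEmpty_iff.2 (nonempty_iso_of_even (Nat.not_odd_iff_even.1 hodd) h) hempty
  · exact fun hodd => ⟨exists_isTFIso_of_odd hodd, isEmpty_CG_iso_CG'⟩
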